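/- arXiv:math/0301022 — 4 statements merged into one kernel-verified Lean document; each statement's English description precedes it below -/
import Mathlib

section
/- For every real h, the 5×5 real matrices X = -E13 - 2h·E15 + E24 + 2E35, V+ = (1/2)E12 + (h/4)E14 - (1/2)E23 - (h/2)E25 - (1/2)E34 - E45, H = E11 - h²E15 + (1/2)E22 + (h/2)E24 + 2h·E35 - (1/2)E44 - E55, V- = -(5h²/16)E14 - E21 - (h/4)E23 - (h²/8)E25 - (1/2)E32 + (3h/4)E34 + (1/2)E43 + h·E45 - (1/2)E54, Y = (5h²/8)E13 + (5h³/4)E15 - (h/2)E22 - (3h²/4)E24 - 2E31 - 2h·E33 - (13h²/4)E35 + E42 + (h/2)E44 + E53 + 2h·E55 satisfy all defining relations of U_h(osp(2/1)); here X³ = 0, so sinh(hX) = hX and cosh(hX) = I + (h²/2)X². (This is the adjoint representation of U_h(osp(2/1)) obtained by the first deformation map.) -/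
open Matrix

/-!
The odd elements `V±` generate the algebra: `X = 4 V+²`, `Y = -4 V-²` and `H = -2 {V+, V-}`.
Since `[a², b] = [a, {a, b}]` in any ring, the brackets of `X` and `Y` with `V±` reduce to those of
`H` with `V±`, and the brackets among `H`, `X`, `Y` follow from these by the Leibniz rule. So it
suffices to verify the three expressions of `X`, `Y`, `H`, the two brackets `[H, V±]`, and
`V+ X² = 0` on the matrices.
-/

namespace UhOsp

section Ring

variable {A : Type*} [Ring A]

theorem lie_nsmul_mul_self (n : ℕ) (a b : A) :
    ⁅a, n • (b * b)⁆ = n • (⁅a, b⁆ * b + b * ⁅a, b⁆) := by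
  simp only [Ring.lie_def, mul_smul_comm, smul_mul_assoc, ← smul_sub]
  congr 1
  noncomm_ring

/-- With `X = 4 a²` and `H = -2 {a, b}` this reads `[X, b] = 2 [H, a]`. -/
theorem lie_four_nsmul_mul_self_left (a b : A) :
    ⁅4 • (a * a), b⁆ = 2 • ⁅-(2 • (a * b + b * a)), a⁆ := by
  simp only [Ring.lie_def]
  noncomm_ring

end Ring

section Algebra

variable {K A : Type*} [Field K] [Ring A] [Algebra K A]

/-- The value of `cosh (hX)` when `X ^ 3 = 0`. -/
def cosh (h : K) (X : A) : A := 1 + (h ^ 2 / 2) • (X * X)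

/-- The defining relations of `U_h(osp(2/1))` for elements of an algebra in which `X ^ 3 = 0`, so
that `cosh (hX)` is quadratic in `X` and `sinh (hX)` is replaced by `hX`. -/
structure Relations (h : K) (X Vp H Vm Y : A) : Prop where
  X_cubed : X * X * X = 0
  lie_H_Vp : ⁅H, Vp⁆ = (1 / 2 : K) • (Vp * cosh h X)
  lie_H_Vm : ⁅H, Vm⁆ = -((1 / 4 : K) • (Vm * cosh h X + cosh h X * Vm))
  anticomm_Vp_Vm : Vp * Vm + Vm * Vp = -((1 / 2 : K) • H)
  lie_H_X : ⁅H, X⁆ = X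
  lie_H_Y : ⁅H, Y⁆ = -((1 / 2 : K) • (Y * cosh h X + cosh h X * Y))
    + h ^ 2 • (Vm * X * Vp) - h ^ 2 • (Vp * X * Vm)
  lie_X_Y : ⁅X, Y⁆ = (2 : K) • H
  Vp_mul_self : Vp * Vp = (1 / 4 : K) • X
  Vm_mul_self : Vm * Vm = -((1 / 4 : K) • Y)
  lie_X_Vp : ⁅X, Vp⁆ = 0
  lie_Y_Vm : ⁅Y, Vm⁆ = 0
  lie_X_Vm : ⁅X, Vm⁆ = Vp
  lie_Y_Vp : ⁅Y, Vp⁆ = (1 / 2 : K) • (Vm * cosh h X + cosh h X * Vm)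

/-- The relations of `U_h(osp(2/1))` that determine all the others when `V+ X² = 0`: the even
generators in terms of the odd ones `V±`, and the brackets `[H, V±]`. Denominators are cleared, and
`V+ cosh (hX)` is simplified to `V+`. -/
structure OddRelations (h : K) (X Vp H Vm Y : A) : Prop where
  X_eq : X = 4 • (Vp * Vp)
  Y_eq : Y = -(4 • (Vm * Vm))
  H_eq : H = -(2 • (Vp * Vm + Vm * Vp))
  Vp_mul_X_sq : Vp * (X * X) = 0
  two_nsmul_lie_H_Vp : 2 • ⁅H, Vp⁆ = Vp
  four_nsmul_lie_H_Vm : 4 • ⁅H, Vm⁆ = -(Vm * cosh h X + cosh h X * Vm)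

namespace OddRelations

variable {h : K} {X Vp H Vm Y : A}

theorem X_cubed (r : OddRelations h X Vp H Vm Y) : X * X * X = 0 :=
  calc X * X * X = 4 • (Vp * Vp) * (X * X) := by rw [← r.X_eq, mul_assoc]
    _ = 0 := by rw [smul_mul_assoc, mul_assoc, r.Vp_mul_X_sq, mul_zero, smul_zero]

theorem Vp_mul_cosh (r : OddRelations h X Vp H Vm Y) : Vp * cosh h X = Vp := by
  rw [cosh, mul_add, mul_one, mul_smul_comm, r.Vp_mul_X_sq, smul_zero, add_zero]

theorem commute_X_Vp (r : OddRelations h X Vp H Vm Y) : Commute X Vp := by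
  rw [r.X_eq]
  exact ((Commute.refl Vp).mul_left (Commute.refl Vp)).smul_left 4

theorem commute_Y_Vm (r : OddRelations h X Vp H Vm Y) : Commute Y Vm := by
  rw [r.Y_eq]
  exact (((Commute.refl Vm).mul_left (Commute.refl Vm)).smul_left 4).neg_left

theorem lie_X_Vm (r : OddRelations h X Vp H Vm Y) : ⁅X, Vm⁆ = Vp := by
  rw [r.X_eq, lie_four_nsmul_mul_self_left, ← r.H_eq, r.two_nsmul_lie_H_Vp]

theorem lie_Y_Vp (r : OddRelations h X Vp H Vm Y) : ⁅Y, Vp⁆ = -(2 • ⁅H, Vm⁆) :=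
  calc ⁅Y, Vp⁆ = -⁅4 • (Vm * Vm), Vp⁆ := by
        rw [r.Y_eq, Ring.lie_def, Ring.lie_def]
        noncomm_ring
    _ = -(2 • ⁅H, Vm⁆) := by rw [lie_four_nsmul_mul_self_left, add_comm (Vm * Vp), ← r.H_eq]

theorem lie_right_Y (r : OddRelations h X Vp H Vm Y) (a : A) :
    ⁅a, Y⁆ = -(4 • (⁅a, Vm⁆ * Vm + Vm * ⁅a, Vm⁆)) := by
  rw [← lie_nsmul_mul_self, r.Y_eq, Ring.lie_def, Ring.lie_def]
  noncomm_ring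

theorem lie_X_Y (r : OddRelations h X Vp H Vm Y) : ⁅X, Y⁆ = 2 • H := by
  rw [r.lie_right_Y, r.lie_X_Vm, r.H_eq]
  abel

theorem lie_H_X (r : OddRelations h X Vp H Vm Y) : ⁅H, X⁆ = X :=
  calc ⁅H, X⁆ = 4 • (⁅H, Vp⁆ * Vp + Vp * ⁅H, Vp⁆) := by rw [r.X_eq, lie_nsmul_mul_self]
    _ = 2 • (2 • ⁅H, Vp⁆ * Vp + Vp * 2 • ⁅H, Vp⁆) := by noncomm_ring
    _ = 4 • (Vp * Vp) := by
        rw [r.two_nsmul_lie_H_Vp]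
        abel
    _ = X := r.X_eq.symm

theorem lie_cosh_Vm [NeZero (2 : K)] (r : OddRelations h X Vp H Vm Y) :
    ⁅cosh h X, Vm⁆ = h ^ 2 • (X * Vp) := by
  have lie_X_sq : X * X * Vm - Vm * (X * X) = (2 : K) • (X * Vp) :=
    calc X * X * Vm - Vm * (X * X) = X * ⁅X, Vm⁆ + ⁅X, Vm⁆ * X := by
          rw [Ring.lie_def]
          noncomm_ring
      _ = (2 : K) • (X * Vp) := by rw [r.lie_X_Vm, ← r.commute_X_Vp.eq, two_smul]
  calc ⁅cosh h X, Vm⁆ = (h ^ 2 / 2) • (X * X * Vm - Vm * (X * X)) := by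
        rw [Ring.lie_def, cosh, add_mul, mul_add, one_mul, mul_one, add_sub_add_left_eq_sub,
          smul_mul_assoc, mul_smul_comm, smul_sub]
    _ = h ^ 2 • (X * Vp) := by rw [lie_X_sq, smul_smul, div_mul_cancel₀ _ two_ne_zero]

theorem lie_H_Y_eq_lie_cosh (r : OddRelations h X Vp H Vm Y) : ⁅H, Y⁆ =
    2 • (Vm * Vm * cosh h X + cosh h X * (Vm * Vm))
      + (Vm * ⁅cosh h X, Vm⁆ - ⁅cosh h X, Vm⁆ * Vm) :=
  calc ⁅H, Y⁆ = -(4 • ⁅H, Vm⁆ * Vm + Vm * 4 • ⁅H, Vm⁆) := by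
        rw [r.lie_right_Y, smul_add, smul_mul_assoc, mul_smul_comm]
    _ = (Vm * cosh h X + cosh h X * Vm) * Vm + Vm * (Vm * cosh h X + cosh h X * Vm) := by
        rw [r.four_nsmul_lie_H_Vm]
        noncomm_ring
    _ = _ := by
        rw [Ring.lie_def]
        noncomm_ring

theorem lie_H_Y [NeZero (2 : K)] (r : OddRelations h X Vp H Vm Y) : ⁅H, Y⁆ =
    -((1 / 2 : K) • (Y * cosh h X + cosh h X * Y))
      + h ^ 2 • (Vm * X * Vp) - h ^ 2 • (Vp * X * Vm) := by
  have half_smul_Y : (1 / 2 : K) • (Y * cosh h X + cosh h X * Y) =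
      -(2 • (Vm * Vm * cosh h X + cosh h X * (Vm * Vm))) := by
    rw [r.Y_eq, neg_mul, mul_neg, smul_mul_assoc, mul_smul_comm]
    match_scalars <;> grind [two_ne_zero (α := K)]
  rw [r.lie_H_Y_eq_lie_cosh, r.lie_cosh_Vm, half_smul_Y, neg_neg, mul_smul_comm, smul_mul_assoc,
    ← mul_assoc Vm X Vp, r.commute_X_Vp.eq, add_sub_assoc]

end OddRelations

variable [NeZero (2 : K)]

theorem four_ne_zero_and_eight_ne_zero_and_sixteen_ne_zero :
    (4 : K) ≠ 0 ∧ (8 : K) ≠ 0 ∧ (16 : K) ≠ 0 := by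
  have two_pow_ne_zero (n : ℕ) : (2 : K) ^ n ≠ 0 := pow_ne_zero n two_ne_zero
  grind [two_pow_ne_zero 2, two_pow_ne_zero 3, two_pow_ne_zero 4]

theorem OddRelations.relations {h : K} {X Vp H Vm Y : A} (r : OddRelations h X Vp H Vm Y) :
    Relations h X Vp H Vm Y := by
  obtain ⟨four_ne_zero, -⟩ := four_ne_zero_and_eight_ne_zero_and_sixteen_ne_zero (K := K)
  have half_smul (a : A) : (1 / 2 : K) • 2 • a = a := by
    rw [← ofNat_smul_eq_nsmul K, one_div, inv_smul_smul₀ two_ne_zero]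
  have quarter_smul (a : A) : (1 / 4 : K) • 4 • a = a := by
    rw [← ofNat_smul_eq_nsmul K, one_div, inv_smul_smul₀ four_ne_zero]
  exact
    { X_cubed := r.X_cubed
      lie_H_Vp := by rw [r.Vp_mul_cosh, ← half_smul ⁅H, Vp⁆, r.two_nsmul_lie_H_Vp]
      lie_H_Vm := by rw [← smul_neg, ← r.four_nsmul_lie_H_Vm, quarter_smul]
      anticomm_Vp_Vm := by rw [r.H_eq, smul_neg, neg_neg, half_smul]
      lie_H_X := r.lie_H_X
      lie_H_Y := r.lie_H_Y
      lie_X_Y := by rw [r.lie_X_Y, two_nsmul, two_smul]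
      Vp_mul_self := by rw [r.X_eq, quarter_smul]
      Vm_mul_self := by rw [r.Y_eq, smul_neg, neg_neg, quarter_smul]
      lie_X_Vp := r.commute_X_Vp.lie_eq
      lie_Y_Vm := r.commute_Y_Vm.lie_eq
      lie_X_Vm := r.lie_X_Vm
      lie_Y_Vp := by
        rw [r.lie_Y_Vp, ← half_smul (2 • ⁅H, Vm⁆), ← smul_neg, ← mul_nsmul,
          r.four_nsmul_lie_H_Vm, neg_neg] }

end Algebra

section Matrices

variable {K : Type*} [Field K] (h : K)

/-- The matrix of `X` in the adjoint representation of `U_h(osp(2/1))` given by the first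
deformation map. -/
def adX : Matrix (Fin 5) (Fin 5) K :=
  !![0, 0, -1, 0, -2 * h;
     0, 0, 0, 1, 0;
     0, 0, 0, 0, 2;
     0, 0, 0, 0, 0;
     0, 0, 0, 0, 0]

/-- The matrix of `V+` in the adjoint representation. -/
def adVp : Matrix (Fin 5) (Fin 5) K :=
  !![0, 1 / 2, 0, h / 4, 0;
     0, 0, -(1 / 2), 0, -(h / 2);
     0, 0, 0, -(1 / 2), 0;
     0, 0, 0, 0, -1;
     0, 0, 0, 0, 0]

/-- The matrix of `H` in the adjoint representation. -/
def adH : Matrix (Fin 5) (Fin 5) K :=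
  !![1, 0, 0, 0, -h ^ 2;
     0, 1 / 2, 0, h / 2, 0;
     0, 0, 0, 0, 2 * h;
     0, 0, 0, -(1 / 2), 0;
     0, 0, 0, 0, -1]

/-- The matrix of `V-` in the adjoint representation. -/
def adVm : Matrix (Fin 5) (Fin 5) K :=
  !![0, 0, 0, -(5 * h ^ 2 / 16), 0;
     -1, 0, -(h / 4), 0, -(h ^ 2 / 8);
     0, -(1 / 2), 0, 3 * h / 4, 0;
     0, 0, 1 / 2, 0, h;
     0, 0, 0, -(1 / 2), 0]

/-- The matrix of `Y` in the adjoint representation. -/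
def adY : Matrix (Fin 5) (Fin 5) K :=
  !![0, 0, 5 * h ^ 2 / 8, 0, 5 * h ^ 3 / 4;
     0, -(h / 2), 0, -(3 * h ^ 2 / 4), 0;
     -2, 0, -2 * h, 0, -(13 * h ^ 2 / 4);
     0, 1, 0, h / 2, 0;
     0, 0, 1, 0, 2 * h]

theorem forall_fin_five {p : Fin 5 → Prop} : (∀ i, p i) ↔ p 0 ∧ p 1 ∧ p 2 ∧ p 3 ∧ p 4 := by
  simp [Fin.forall_fin_succ]

theorem adVp_mul_adX_sq : adVp h * (adX h * adX h) = 0 := by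
  simp only [← Matrix.ext_iff, forall_fin_five, adX, adVp, mul_apply,
    Fin.sum_univ_five, of_apply, cons_val, Matrix.zero_apply]
  grind

variable [NeZero (2 : K)]

theorem adX_eq : adX h = 4 • (adVp h * adVp h) := by
  have h2 : (2 : K) ≠ 0 := two_ne_zero
  obtain ⟨h4, -⟩ := four_ne_zero_and_eight_ne_zero_and_sixteen_ne_zero (K := K)
  simp only [← Matrix.ext_iff, forall_fin_five, adX, adVp, Matrix.smul_apply, mul_apply,
    Fin.sum_univ_five, of_apply, cons_val]
  grind

theorem adY_eq : adY h = -(4 • (adVm h * adVm h)) := by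
  have h2 : (2 : K) ≠ 0 := two_ne_zero
  obtain ⟨h4, h8, h16⟩ := four_ne_zero_and_eight_ne_zero_and_sixteen_ne_zero (K := K)
  simp only [← Matrix.ext_iff, forall_fin_five, adY, adVm, Matrix.neg_apply, Matrix.smul_apply,
    mul_apply, Fin.sum_univ_five, of_apply, cons_val]
  grind

theorem adH_eq : adH h = -(2 • (adVp h * adVm h + adVm h * adVp h)) := by
  have h2 : (2 : K) ≠ 0 := two_ne_zero
  obtain ⟨h4, h8, h16⟩ := four_ne_zero_and_eight_ne_zero_and_sixteen_ne_zero (K := K)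
  simp only [← Matrix.ext_iff, forall_fin_five, adH, adVp, adVm, Matrix.neg_apply,
    Matrix.smul_apply, Matrix.add_apply, mul_apply, Fin.sum_univ_five, of_apply, cons_val]
  grind

theorem two_nsmul_lie_adH_adVp : 2 • ⁅adH h, adVp h⁆ = adVp h := by
  have h2 : (2 : K) ≠ 0 := two_ne_zero
  obtain ⟨h4, -⟩ := four_ne_zero_and_eight_ne_zero_and_sixteen_ne_zero (K := K)
  simp only [← Matrix.ext_iff, forall_fin_five, Ring.lie_def, adH, adVp, Matrix.smul_apply,
    Matrix.sub_apply, mul_apply, Fin.sum_univ_five, of_apply, cons_val]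
  grind

theorem cosh_adX : cosh h (adX h) =
    !![1, 0, 0, 0, -h ^ 2;
       0, 1, 0, 0, 0;
       0, 0, 1, 0, 0;
       0, 0, 0, 1, 0;
       0, 0, 0, 0, 1] := by
  have h2 : (2 : K) ≠ 0 := two_ne_zero
  simp only [← Matrix.ext_iff, forall_fin_five, cosh, adX, Matrix.add_apply, Matrix.one_apply,
    Matrix.smul_apply, smul_eq_mul, mul_apply, Fin.sum_univ_five, of_apply, cons_val]
  grind

theorem four_nsmul_lie_adH_adVm : 4 • ⁅adH h, adVm h⁆ =
    -(adVm h * cosh h (adX h) + cosh h (adX h) * adVm h) := by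
  have h2 : (2 : K) ≠ 0 := two_ne_zero
  obtain ⟨h4, h8, h16⟩ := four_ne_zero_and_eight_ne_zero_and_sixteen_ne_zero (K := K)
  simp only [← Matrix.ext_iff, forall_fin_five, Ring.lie_def, cosh_adX, adH, adVm,
    Matrix.neg_apply, Matrix.smul_apply, Matrix.add_apply, Matrix.sub_apply, mul_apply,
    Fin.sum_univ_five, of_apply, cons_val]
  grind

theorem oddRelations_ad : OddRelations h (adX h) (adVp h) (adH h) (adVm h) (adY h) where
  X_eq := adX_eq h
  Y_eq := adY_eq h
  H_eq := adH_eq h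
  Vp_mul_X_sq := adVp_mul_adX_sq h
  two_nsmul_lie_H_Vp := two_nsmul_lie_adH_adVp h
  four_nsmul_lie_H_Vm := four_nsmul_lie_adH_adVm h

end Matrices

end UhOsp

open UhOsp in
theorem stmt_6_general {K : Type*} [Field K] [NeZero (2 : K)] (h : K) :
    Relations h (adX h) (adVp h) (adH h) (adVm h) (adY h) :=
  (oddRelations_ad h).relations

/-- The adjoint representation of `U_h(osp(2/1))` obtained by the first deformation
map: for every real `h` the given 5×5 matrices satisfy all defining relations of
`U_h(osp(2/1))` (here `X³ = 0`, so `sinh(hX) = hX` and `cosh(hX) = I + (h²/2)X²`). -/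
theorem stmt_6 (h : ℝ) (X Vp H Vm Y : Matrix (Fin 5) (Fin 5) ℝ)
    (hX : X = !![0, 0, -1, 0, -2*h;
                 0, 0, 0, 1, 0;
                 0, 0, 0, 0, 2;
                 0, 0, 0, 0, 0;
                 0, 0, 0, 0, 0])
    (hVp : Vp = !![0, 1/2, 0, h/4, 0;
                   0, 0, -(1/2), 0, -(h/2);
                   0, 0, 0, -(1/2), 0;
                   0, 0, 0, 0, -1;
                   0, 0, 0, 0, 0])
    (hH : H = !![1, 0, 0, 0, -h^2;
                 0, 1/2, 0, h/2, 0;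
                 0, 0, 0, 0, 2*h;
                 0, 0, 0, -(1/2), 0;
                 0, 0, 0, 0, -1])
    (hVm : Vm = !![0, 0, 0, -(5*h^2/16), 0;
                   -1, 0, -(h/4), 0, -(h^2/8);
                   0, -(1/2), 0, 3*h/4, 0;
                   0, 0, 1/2, 0, h;
                   0, 0, 0, -(1/2), 0])
    (hY : Y = !![0, 0, 5*h^2/8, 0, 5*h^3/4;
                 0, -(h/2), 0, -(3*h^2/4), 0;
                 -2, 0, -2*h, 0, -(13*h^2/4);
                 0, 1, 0, h/2, 0;
                 0, 0, 1, 0, 2*h]) :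
    let C : Matrix (Fin 5) (Fin 5) ℝ := 1 + (h^2/2) • (X * X)
    X * X * X = 0 ∧
    H * Vp - Vp * H = (1/2 : ℝ) • (Vp * C) ∧
    H * Vm - Vm * H = -((1/4 : ℝ) • (Vm * C + C * Vm)) ∧
    Vp * Vm + Vm * Vp = -((1/2 : ℝ) • H) ∧
    H * X - X * H = X ∧
    H * Y - Y * H = -((1/2 : ℝ) • (Y * C + C * Y))
      + h^2 • (Vm * X * Vp) - h^2 • (Vp * X * Vm) ∧
    X * Y - Y * X = (2 : ℝ) • H ∧
    Vp * Vp = (1/4 : ℝ) • X ∧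
    Vm * Vm = -((1/4 : ℝ) • Y) ∧
    X * Vp - Vp * X = 0 ∧
    Y * Vm - Vm * Y = 0 ∧
    X * Vm - Vm * X = Vp ∧
    Y * Vp - Vp * Y = (1/2 : ℝ) • (Vm * C + C * Vm) := by
  subst hX hVp hH hVm hY
  obtain ⟨X3, HVp, HVm, VpVm, HX, HY, XY, Vp2, Vm2, XVp, YVm, XVm, YVp⟩ := stmt_6_general h
  exact ⟨X3, HVp, HVm, VpVm, HX, HY, XY, Vp2, Vm2, XVp, YVm, XVm, YVp⟩
end

section
/- Let h be real and J real with 1 - 2hJ > 0 and J ≠ 0, and set f1 = (1 - 2hJ)^(-1/4). Then: (i) hJ·f1² + sqrt(1 + h²J²f1⁴) = (1 - 2hJ)^(-1/2); (ii) the solution formulas give f2 := sqrt(1 + h²J²f1⁴)·f1/(f1 + 2J·f1') = (1 - 2hJ)^(1/2) (where f1' = (h/2)(1 - 2hJ)^(-5/4)), f3 := 1/f1 = (1 - 2hJ)^(1/4), w := (1 - f2)/(J·f1) = 2h(1 - 2hJ)^(1/4)/(1 + (1 - 2hJ)^(1/2)), and u := -(1/4)w + (1/2)(f1'/f1²)f2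 = (h/4)(1 - 2hJ)^(-1/4)·(1 - (1 - 2hJ)^(1/2))/(1 + (1 - 2hJ)^(1/2)). (Equivalently, with σ = -log(1 - 2hJ): T = e^(σ/2), f2 = e^(-σ/2), f3 = e^(-σ/4), w = h/cosh(σ/4), u = (h/4)e^(σ/4)tanh(σ/4), which is the first deformation map of U_h(osp(2/1)).) -/
/-!
Put `σ = -log (1 - 2hJ)`. Then `f₁ = e^(σ/4)` and `hJ f₁² = sinh (σ/2)`, so the square root in the
solution formulas is `cosh (σ/2)` and `T = sinh (σ/2) + cosh (σ/2) = e^(σ/2)`. The same substitution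
turns `f₁ + 2 J f₁'` into `e^(3σ/4) cosh (σ/2)`, which gives `f₂ = e^(-σ/2)`, and
`sinh (σ/2) = 2 sinh (σ/4) cosh (σ/4)` then gives `w = h / cosh (σ/4)` and
`u = (h/4) e^(σ/4) tanh (σ/4)`.
-/

open Real

namespace DeformationMap

section SolutionFormulas

variable (h J f f' : ℝ)

/-- The quantity `T = exp (hX)` of the deformation-map ansatz, as a function of the value `f` of
`f₁` at `J`. -/
noncomputable def T : ℝ := h * J * f ^ 2 + √(1 + h ^ 2 * J ^ 2 * f ^ 4)

/-- The coefficient `f₂` in `H = f₂(J₊) J₀`; here `f` and `f'` are the values at `J` of `f₁` and of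
its derivative. -/
noncomputable def f₂ : ℝ := √(1 + h ^ 2 * J ^ 2 * f ^ 4) * f / (f + 2 * J * f')

/-- The coefficient `w` in `V₋ = f₃(J₊) v₋ + u(J₊) v₊ + w(J₊) v₊ J₀`, with `f` and `f'` as in `f₂`;
it takes the junk value `0` where `J * f = 0`. -/
noncomputable def w : ℝ := (1 - f₂ h J f f') / (J * f)

/-- The coefficient `u` in `V₋ = f₃(J₊) v₋ + u(J₊) v₊ + w(J₊) v₊ J₀`, with `f` and `f'` as in
`f₂`. -/
noncomputable def u : ℝ := -(1 / 4) * w h J f f' + (1 / 2) * (f' / f ^ 2) * f₂ h J f f'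

theorem sqrt_eq_cosh_arsinh :
    √(1 + h ^ 2 * J ^ 2 * f ^ 4) = cosh (arsinh (h * J * f ^ 2)) := by
  rw [cosh_arsinh]
  ring_nf

theorem T_eq_exp_arsinh : T h J f = exp (arsinh (h * J * f ^ 2)) := by
  rw [T, sqrt_eq_cosh_arsinh, ← sinh_add_cosh, sinh_arsinh]

end SolutionFormulas

section Hyperbolic

theorem one_add_exp_neg_two_mul (x : ℝ) : 1 + exp (-(2 * x)) = 2 * exp (-x) * cosh x := by
  have hone : exp x * exp (-x) = 1 := by rw [← exp_add, add_neg_cancel, exp_zero]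
  have hexp : exp (-(2 * x)) = exp (-x) * exp (-x) := by rw [← exp_add]; ring_nf
  rw [cosh_eq, hexp]
  linear_combination -hone

theorem one_sub_exp_neg_two_mul (x : ℝ) : 1 - exp (-(2 * x)) = 2 * exp (-x) * sinh x := by
  have hone : exp x * exp (-x) = 1 := by rw [← exp_add, add_neg_cancel, exp_zero]
  have hexp : exp (-(2 * x)) = exp (-x) * exp (-x) := by rw [← exp_add]; ring_nf
  rw [sinh_eq, hexp]
  linear_combination -hone

theorem inv_cosh_eq_exp_neg (x : ℝ) : (cosh x)⁻¹ = 2 * exp (-x) / (1 + exp (-(2 * x))) := by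
  rw [one_add_exp_neg_two_mul, div_mul_cancel_left₀ (by positivity)]

theorem tanh_eq_exp_neg (x : ℝ) :
    tanh x = (1 - exp (-(2 * x))) / (1 + exp (-(2 * x))) := by
  rw [one_sub_exp_neg_two_mul, one_add_exp_neg_two_mul, mul_div_mul_left _ _ (by positivity),
    tanh_eq_sinh_div_cosh]

theorem exp_sub_inv_cosh (x : ℝ) : exp x - (cosh x)⁻¹ = exp x * tanh x := by
  have hcosh : cosh x ≠ 0 := (cosh_pos x).ne'
  have hone : exp x * (cosh x - sinh x) = 1 := by
    rw [cosh_sub_sinh, ← exp_add, add_neg_cancel, exp_zero]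
  rw [tanh_eq_sinh_div_cosh]
  field_simp
  linear_combination hone

end Hyperbolic

section FirstDeformationMap

variable {h J σ : ℝ}

theorem mul_exp_sq_eq_sinh (hσ : 1 - 2 * h * J = exp (-σ)) :
    h * J * exp (σ / 4) ^ 2 = sinh (σ / 2) := by
  have hmul : exp (-σ) * exp (σ / 2) = exp (-(σ / 2)) := by rw [← exp_add]; ring_nf
  have hsq : exp (σ / 4) ^ 2 = exp (σ / 2) := by rw [← exp_nat_mul]; ring_nf
  rw [hsq, sinh_eq]
  linear_combination (-exp (σ / 2) / 2) * hσ - hmul / 2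

theorem T_eq_exp (hσ : 1 - 2 * h * J = exp (-σ)) : T h J (exp (σ / 4)) = exp (σ / 2) := by
  rw [T_eq_exp_arsinh, mul_exp_sq_eq_sinh hσ, arsinh_sinh]

theorem exp_add_eq_exp_mul_cosh (hσ : 1 - 2 * h * J = exp (-σ)) :
    exp (σ / 4) + 2 * J * (h / 2 * exp (5 * σ / 4)) = exp (3 * σ / 4) * cosh (σ / 2) := by
  have hfive : exp (5 * σ / 4) = exp (3 * σ / 4) * exp (σ / 4) ^ 2 := by
    rw [← exp_nat_mul, ← exp_add]; ring_nf
  have hquarter : exp (σ / 4) = exp (3 * σ / 4) * exp (-(σ / 2)) := by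
    rw [← exp_add]; ring_nf
  calc exp (σ / 4) + 2 * J * (h / 2 * exp (5 * σ / 4))
      = exp (σ / 4) + exp (3 * σ / 4) * (h * J * exp (σ / 4) ^ 2) := by rw [hfive]; ring
    _ = exp (3 * σ / 4) * (exp (-(σ / 2)) + sinh (σ / 2)) := by
        rw [mul_exp_sq_eq_sinh hσ, hquarter]; ring
    _ = exp (3 * σ / 4) * cosh (σ / 2) := by rw [← cosh_sub_sinh, sub_add_cancel]

theorem f₂_eq_exp (hσ : 1 - 2 * h * J = exp (-σ)) :
    f₂ h J (exp (σ / 4)) (h / 2 * exp (5 * σ / 4)) = exp (-(σ / 2)) := by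
  have hcosh : cosh (σ / 2) ≠ 0 := (cosh_pos _).ne'
  rw [f₂, sqrt_eq_cosh_arsinh, mul_exp_sq_eq_sinh hσ, arsinh_sinh, exp_add_eq_exp_mul_cosh hσ,
    mul_comm, mul_div_mul_right _ _ hcosh, ← exp_sub]
  ring_nf

theorem w_eq_div_cosh (hσ : 1 - 2 * h * J = exp (-σ)) (hJ : J ≠ 0) :
    w h J (exp (σ / 4)) (h / 2 * exp (5 * σ / 4)) = h / cosh (σ / 4) := by
  have hsinh : h * J * exp (σ / 4) ^ 2 = 2 * sinh (σ / 4) * cosh (σ / 4) := by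
    rw [mul_exp_sq_eq_sinh hσ, ← sinh_two_mul]; ring_nf
  have hhalf : σ / 2 = 2 * (σ / 4) := by ring
  have hsub : (1 - exp (-(σ / 2))) * exp (σ / 4) = 2 * sinh (σ / 4) := by
    rw [hhalf, one_sub_exp_neg_two_mul, mul_right_comm, mul_assoc 2, ← exp_add, neg_add_cancel,
      exp_zero, mul_one]
  rw [w, f₂_eq_exp hσ, div_eq_div_iff (by positivity) (cosh_pos _).ne']
  apply mul_right_cancel₀ (exp_ne_zero (σ / 4))
  linear_combination cosh (σ / 4) * hsub - hsinh

theorem u_eq_exp_mul_tanh (hσ : 1 - 2 * h * J = exp (-σ)) (hJ : J ≠ 0) :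
    u h J (exp (σ / 4)) (h / 2 * exp (5 * σ / 4)) = h / 4 * exp (σ / 4) * tanh (σ / 4) := by
  have hexp : exp (5 * σ / 4) / exp (σ / 4) ^ 2 * exp (-(σ / 2)) = exp (σ / 4) := by
    rw [← exp_nat_mul, ← exp_sub, ← exp_add]; ring_nf
  rw [u, w_eq_div_cosh hσ hJ, f₂_eq_exp hσ]
  linear_combination h / 4 * hexp + h / 4 * exp_sub_inv_cosh (σ / 4)

end FirstDeformationMap

end DeformationMap

/-- The first deformation map of `U_h(osp(2/1))`: for `f1 = (1 - 2hJ)^(-1/4)` the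
quantity `T = hJ·f1² + √(1 + h²J²f1⁴)` equals `(1 - 2hJ)^(-1/2)`, and the solution
formulas give `f2 = (1 - 2hJ)^(1/2)`, `f3 = (1 - 2hJ)^(1/4)`,
`w = 2h(1 - 2hJ)^(1/4)/(1 + (1 - 2hJ)^(1/2))` and
`u = (h/4)(1 - 2hJ)^(-1/4)(1 - (1 - 2hJ)^(1/2))/(1 + (1 - 2hJ)^(1/2))`. -/
theorem stmt_10 (h J : ℝ) (hpos : 1 - 2*h*J > 0) (hJ : J ≠ 0) :
    let f1 : ℝ := (1 - 2*h*J) ^ (-(1/4) : ℝ)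
    let f1' : ℝ := (h/2) * (1 - 2*h*J) ^ (-(5/4) : ℝ)
    let f2 : ℝ := Real.sqrt (1 + h^2 * J^2 * f1^4) * f1 / (f1 + 2*J*f1')
    let f3 : ℝ := 1 / f1
    let w : ℝ := (1 - f2) / (J * f1)
    let u : ℝ := -(1/4) * w + (1/2) * (f1' / f1^2) * f2
    h*J*f1^2 + Real.sqrt (1 + h^2 * J^2 * f1^4) = (1 - 2*h*J) ^ (-(1/2) : ℝ) ∧
    f2 = (1 - 2*h*J) ^ ((1/2) : ℝ) ∧
    f3 = (1 - 2*h*J) ^ ((1/4) : ℝ) ∧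
    w = 2*h*(1 - 2*h*J) ^ ((1/4) : ℝ) / (1 + (1 - 2*h*J) ^ ((1/2) : ℝ)) ∧
    u = (h/4) * (1 - 2*h*J) ^ (-(1/4) : ℝ) * (1 - (1 - 2*h*J) ^ ((1/2) : ℝ))
          / (1 + (1 - 2*h*J) ^ ((1/2) : ℝ)) := by
  obtain ⟨σ, hσ⟩ : ∃ σ, 1 - 2 * h * J = exp (-σ) :=
    ⟨-log (1 - 2 * h * J), by rw [neg_neg, exp_log hpos]⟩
  have hpow (r x : ℝ) (hx : -σ * r = x) : (1 - 2 * h * J) ^ r = exp x := by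
    rw [hσ, ← exp_mul, hx]
  simp only [hpow (-(1 / 4)) (σ / 4) (by ring), hpow (-(5 / 4)) (5 * σ / 4) (by ring),
    hpow (-(1 / 2)) (σ / 2) (by ring), hpow (1 / 2) (-(σ / 2)) (by ring),
    hpow (1 / 4) (-(σ / 4)) (by ring)]
  have hhalf : σ / 2 = 2 * (σ / 4) := by ring
  refine ⟨DeformationMap.T_eq_exp hσ, DeformationMap.f₂_eq_exp hσ, ?_,
    (DeformationMap.w_eq_div_cosh hσ hJ).trans ?_,
    (DeformationMap.u_eq_exp_mul_tanh hσ hJ).trans ?_⟩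
  · rw [exp_neg, one_div]
  · rw [div_eq_mul_inv, DeformationMap.inv_cosh_eq_exp_neg, hhalf]
    ring
  · rw [DeformationMap.tanh_eq_exp_neg, hhalf, mul_div_assoc]
end

section
/- Let h be real and J real with |hJ| < 2 and J ≠ 0, and set f1 = (1 - h²J²/4)^(-1/2). Then: (i) hJ·f1² + sqrt(1 + h²J²f1⁴) = (1 + hJ/2)/(1 - hJ/2) = exp(2·arctanh(hJ/2)); (ii) the solution formulas give f2 := sqrt(1 + h²J²f1⁴)·f1/(f1 + 2J·f1') = 1 (where f1' = (h²J/4)(1 - h²J²/4)^(-3/2)), f3 := 1/f1 = (1 - h²J²/4)^(1/2), w := (1 - f2)/(J·f1) = 0, and u := -(1/4)w + (1/2)(f1'/f1²)f2 = (h²J/8)(1 - h²J²/4)^(-1/2). (This is the second deformation map of U_h(osp(2/1)), for which H = J0.) -/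
/-! With `f = (1 - t²/4)^(-1/2)` and `t = hJ = 2 tanh a`, one has `f = cosh a` and
`t f² = sinh (2a)`, so that `√(1 + t² f⁴) = cosh (2a) = (1 + t²/4) f²` and `T = exp (2a)`.
Moreover `f + 2J f' = f cosh (2a)`, which is exactly the numerator of `f2`. Algebraically, all of
this follows from the single relation `f² (1 - t²/4) = 1`. -/

lemma rpow_neg_half_sq_mul_self {x : ℝ} (hx : 0 < x) : (x ^ (-(1/2) : ℝ)) ^ 2 * x = 1 := by
  have h_sq : (x ^ (-(1/2) : ℝ)) ^ 2 = x⁻¹ := by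
    rw [← Real.rpow_mul_natCast hx.le, ← Real.rpow_neg_one]
    norm_num
  rw [h_sq, inv_mul_cancel₀ hx.ne']

lemma rpow_neg_three_halves {x : ℝ} (hx : 0 ≤ x) :
    x ^ (-(3/2) : ℝ) = (x ^ (-(1/2) : ℝ)) ^ 3 := by
  rw [← Real.rpow_mul_natCast hx]
  norm_num

lemma exp_two_mul_half_log {x : ℝ} (hx : 0 < x) : Real.exp (2 * ((1/2) * Real.log x)) = x := by
  rw [← mul_assoc, mul_one_div_cancel two_ne_zero, one_mul, Real.exp_log hx]

section

variable {t f : ℝ}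

lemma sqrt_one_add_sq_mul_pow_four (hf : f ^ 2 * (1 - t ^ 2 / 4) = 1) :
    √(1 + t ^ 2 * f ^ 4) = (1 + t ^ 2 / 4) * f ^ 2 := by
  have h_square : 1 + t ^ 2 * f ^ 4 = ((1 + t ^ 2 / 4) * f ^ 2) ^ 2 := by
    linear_combination -(f ^ 2 * (1 - t ^ 2 / 4) + 1) * hf
  rw [h_square, Real.sqrt_sq (by positivity)]

lemma mul_sq_add_sqrt_eq_div (hf : f ^ 2 * (1 - t ^ 2 / 4) = 1) :
    t * f ^ 2 + √(1 + t ^ 2 * f ^ 4) = (1 + t / 2) / (1 - t / 2) := by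
  have h_ne : 1 - t / 2 ≠ 0 := by
    intro h_zero
    have : (0 : ℝ) = 1 := by linear_combination hf - f ^ 2 * (1 + t / 2) * h_zero
    exact zero_ne_one this
  rw [sqrt_one_add_sq_mul_pow_four hf, eq_div_iff h_ne]
  linear_combination (1 + t / 2) * hf

lemma sqrt_mul_self_eq_add (hf : f ^ 2 * (1 - t ^ 2 / 4) = 1) :
    √(1 + t ^ 2 * f ^ 4) * f = f + t ^ 2 / 2 * f ^ 3 := by
  rw [sqrt_one_add_sq_mul_pow_four hf]
  linear_combination f * hf

end

/-- The second deformation map of `U_h(osp(2/1))` (for which `H = J0`): for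
`f1 = (1 - h²J²/4)^(-1/2)` the quantity `T = hJ·f1² + √(1 + h²J²f1⁴)` equals
`(1 + hJ/2)/(1 - hJ/2) = exp(2·arctanh(hJ/2))`, and the solution formulas give
`f2 = 1`, `f3 = (1 - h²J²/4)^(1/2)`, `w = 0`, `u = (h²J/8)(1 - h²J²/4)^(-1/2)`. -/
theorem stmt_11 (h J : ℝ) (hb : |h*J| < 2) (hJ : J ≠ 0) :
    let f1 : ℝ := (1 - h^2*J^2/4) ^ (-(1/2) : ℝ)
    let f1' : ℝ := (h^2*J/4) * (1 - h^2*J^2/4) ^ (-(3/2) : ℝ)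
    let f2 : ℝ := Real.sqrt (1 + h^2 * J^2 * f1^4) * f1 / (f1 + 2*J*f1')
    let f3 : ℝ := 1 / f1
    let w : ℝ := (1 - f2) / (J * f1)
    let u : ℝ := -(1/4) * w + (1/2) * (f1' / f1^2) * f2
    h*J*f1^2 + Real.sqrt (1 + h^2 * J^2 * f1^4) = (1 + h*J/2) / (1 - h*J/2) ∧
    -- `arctanh x = (1/2)·log((1+x)/(1-x))`, so `2·arctanh(hJ/2) = log((1+hJ/2)/(1-hJ/2))`
    (1 + h*J/2) / (1 - h*J/2)
      = Real.exp (2 * ((1/2) * Real.log ((1 + h*J/2) / (1 - h*J/2)))) ∧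
    f2 = 1 ∧
    f3 = (1 - h^2*J^2/4) ^ ((1/2) : ℝ) ∧
    w = 0 ∧
    u = (h^2*J/8) * (1 - h^2*J^2/4) ^ (-(1/2) : ℝ) := by
  intro f1 f1' f2 f3 w u
  obtain ⟨h_lower, h_upper⟩ := abs_lt.mp hb
  have h_num : 0 < 1 + h*J/2 := by linarith
  have h_den : 0 < 1 - h*J/2 := by linarith
  have h_base : 0 < 1 - h^2*J^2/4 := by linear_combination mul_pos h_num h_den
  have hf1 : 0 < f1 := Real.rpow_pos_of_pos h_base _
  have h_rel : f1^2 * (1 - (h*J)^2/4) = 1 := by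
    rw [mul_pow]
    exact rpow_neg_half_sq_mul_self h_base
  have hf1' : f1' = (h^2*J/4) * f1^3 := congrArg _ (rpow_neg_three_halves h_base.le)
  have hf2 : f2 = 1 := by
    have h_eq : Real.sqrt (1 + h^2 * J^2 * f1^4) * f1 = f1 + 2*J*f1' := by
      rw [← mul_pow, sqrt_mul_self_eq_add h_rel, hf1']
      ring
    change _ / (f1 + 2*J*f1') = 1
    rw [← h_eq, div_self (mul_ne_zero (by positivity) hf1.ne')]
  have hw : w = 0 := by simp only [w, hf2, sub_self, zero_div]
  refine ⟨?_, (exp_two_mul_half_log (div_pos h_num h_den)).symm, hf2, ?_, hw, ?_⟩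
  · simpa only [mul_pow] using mul_sq_add_sqrt_eq_div h_rel
  · rw [← neg_neg (1/2 : ℝ), Real.rpow_neg h_base.le, ← one_div]
  · change -(1/4) * w + (1/2) * (f1' / f1^2) * f2 = (h^2*J/8) * f1
    rw [hw, hf2, hf1']
    field_simp
    ring
end

section
/- Let h be real and let X, V+, H, V-, Y be the 5×5 real matrices of the adjoint representation of U_h(osp(2/1)) by the second deformation map: X = -E13 + E24 + 2E35, V+ = (1/2)E12 - (1/2)E23 - (1/2)E34 - E45, H = diag(1, 1/2, 0, -1/2, -1), V- = -(h²/16)E14 - E21 - (h²/8)E25 - (1/2)E32 + (1/2)E43 - (1/2)E54, Y = (h²/8)E13 - (h²/2)E24 - 2E31 - (h²/4)E35 + E42 + E53, and set T^α = I + αhX + (α²h²/2)X² (valid since X³ = 0), T = T^1. Define t_{1/2} = V+T^(-3/2), t_1 = T^(-1)X, t_0 = HT^(-1) + (3h/4)T^(-1)X, t_{-1/2} = V-T^(1/2) + 2hHV+T^(-1/2) + (h²/2)V+T^(-1/2)X, t_{-1} = YT + 2hH² - 2hV-V+T + hH((I + (h²/2)X²) + T^(-1)) + (h²/8)(5T^(-1)X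 - 3hX²), and τ_{-1/2} = V-T^(1/2) + 2hHV+T^(-1/2) + (h/2)V+T^(-1/2)(hX - T^(-1)), τ_{-1} = YT + 2hH² - 2hV-V+T + h²HX - (3h²/8)X. Then τ_{-1/2} = t_{-1/2} - (h/2)t_{1/2} and τ_{-1} = t_{-1} - 2h·t_0 + (h²/2)·t_1. -/
open Matrix

/-! When `X ^ 3 = 0`, the elements `T^α = exp(αhX)` obey the group law of exponentials, so
`T^(-1/2) T^(-1) = T^(-3/2)`, which gives the relation for `τ_{-1/2}`. For `τ_{-1}`, the terms
containing `H` combine through `cosh(hX) - T^(-1) = sinh(hX) = hX`, and the remaining ones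
through `T^(-1) X = X - hX²`. -/

section TruncatedExponential

variable {K A : Type*} [Field K] [Ring A] [Algebra K A]

/-- The exponential of `a • N` truncated after the quadratic term, which is the full exponential
when `N ^ 3 = 0`. In contrast to `IsNilpotent.exp` it does not require a `ℚ`-module structure,
only that `2` be invertible. With `N = X` and `a = αh` it is the operator `T^α`. -/
def truncExp (a : K) (N : A) : A := 1 + a • N + (a ^ 2 / 2) • N ^ 2

/-- The hyperbolic cosine of `a • N` truncated after the quadratic term, the even part of
`truncExp a N`. -/
def truncCosh (a : K) (N : A) : A := 1 + (a ^ 2 / 2) • N ^ 2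

theorem truncExp_mul_truncExp [NeZero (2 : K)] {N : A} (hN : N ^ 3 = 0) (a b : K) :
    truncExp a N * truncExp b N = truncExp (a + b) N := by
  have sq_mul_sq : N ^ 2 * N ^ 2 = 0 := by
    rw [← pow_add]
    exact pow_eq_zero_of_le (by norm_num) hN
  simp only [truncExp, mul_add, add_mul, mul_one, one_mul, smul_mul_assoc, mul_smul_comm,
    ← sq N, ← pow_succ N, ← pow_succ' N, Nat.reduceAdd, hN, sq_mul_sq, smul_zero, add_zero]
  match_scalars <;> field_simp
  ring

theorem truncExp_mul_self {N : A} (hN : N ^ 3 = 0) (a : K) :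
    truncExp a N * N = N + a • N ^ 2 := by
  simp only [truncExp, add_mul, one_mul, smul_mul_assoc, ← sq, ← pow_succ, Nat.reduceAdd, hN,
    smul_zero, add_zero]

theorem truncCosh_eq_truncExp_neg_add (a : K) (N : A) :
    truncCosh a N = truncExp (-a) N + a • N := by
  simp only [truncCosh, truncExp, neg_sq]
  module

end TruncatedExponential

theorem secondSuperdiagonal_pow_three {R : Type*} [Semiring R] (a b c : R) :
    !![0, 0, a, 0, 0;
       0, 0, 0, b, 0;
       0, 0, 0, 0, c;
       0, 0, 0, 0, 0;
       0, 0, 0, 0, 0] ^ 3 = 0 := by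
  ext i j
  fin_cases i <;> fin_cases j <;> simp [pow_succ, Matrix.mul_apply, Fin.sum_univ_five]

theorem stmt_18_general {K A : Type*} [Field K] [NeZero (2 : K)] [Ring A] [Algebra K A]
    (h : K) {X : A} (hX : X ^ 3 = 0) (Vp H Vm Y : A) :
    let T : K → A := fun α => truncExp (α * h) X
    let t12 := Vp * T (-(3 / 2))
    let t1 := T (-1) * X
    let t0 := H * T (-1) + (3 * h / 4) • (T (-1) * X)
    let tm12 := Vm * T (1 / 2) + (2 * h) • (H * Vp * T (-(1 / 2)))
      + (h ^ 2 / 2) • (Vp * T (-(1 / 2)) * X)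
    let tm1 := Y * T 1 + (2 * h) • (H * H) - (2 * h) • (Vm * Vp * T 1)
      + h • (H * (truncCosh h X + T (-1)))
      + (h ^ 2 / 8) • ((5 : K) • (T (-1) * X) - (3 * h) • X ^ 2)
    let τm12 := Vm * T (1 / 2) + (2 * h) • (H * Vp * T (-(1 / 2)))
      + (h / 2) • (Vp * T (-(1 / 2)) * (h • X - T (-1)))
    let τm1 := Y * T 1 + (2 * h) • (H * H) - (2 * h) • (Vm * Vp * T 1) + h ^ 2 • (H * X)
      - (3 * h ^ 2 / 8) • X
    τm12 = tm12 - (h / 2) • t12 ∧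
    τm1 = tm1 - (2 * h) • t0 + (h ^ 2 / 2) • t1 := by
  intro T t12 t1 t0 tm12 tm1 τm12 τm1
  have T_mul_T : T (-(1 / 2)) * T (-1) = T (-(3 / 2)) := by
    simp only [T, truncExp_mul_truncExp hX]
    congr 1
    field_simp
    ring
  have cosh_eq : truncCosh h X = T (-1) + h • X := by
    simp only [T, neg_one_mul, truncCosh_eq_truncExp_neg_add]
  have T_mul_X : T (-1) * X = X - h • X ^ 2 := by
    simp only [T, truncExp_mul_self hX, neg_one_mul, neg_smul, sub_eq_add_neg]
  have H_terms : h ^ 2 • (H * X)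
      = h • (H * (truncCosh h X + T (-1))) - (2 * h) • (H * T (-1)) := by
    simp only [cosh_eq, mul_add, mul_smul_comm]
    module
  have X_terms : -((3 * h ^ 2 / 8) • X)
      = (h ^ 2 / 8) • ((5 : K) • (T (-1) * X) - (3 * h) • X ^ 2)
        - (2 * h) • (3 * h / 4) • (T (-1) * X) + (h ^ 2 / 2) • (T (-1) * X) := by
    -- `field_simp` clears `4` and `8` once they are powers of `2`, even if `K` is not `CharZero`.
    have four_eq : (4 : K) = 2 ^ 2 := by norm_num
    have eight_eq : (8 : K) = 2 ^ 3 := by norm_num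
    rw [T_mul_X, four_eq, eight_eq]
    match_scalars <;> field_simp <;> ring
  constructor
  · simp only [τm12, tm12, t12, mul_sub, mul_assoc, T_mul_T, mul_smul_comm]
    module
  · simp only [τm1, tm1, t0, t1, sub_eq_add_neg _ ((3 * h ^ 2 / 8) • X), H_terms, X_terms, smul_add]
    abel

/-- The relation between the two families of tensor operators for the adjoint
representation of `U_h(osp(2/1))` (written with the second-deformation-map matrices):
`τ_{-1/2} = t_{-1/2} - (h/2)t_{1/2}` and `τ_{-1} = t_{-1} - 2h·t_0 + (h²/2)t_1`. -/
theorem stmt_18 (h : ℝ) (X Vp H Vm Y : Matrix (Fin 5) (Fin 5) ℝ)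
    (hX : X = !![0, 0, -1, 0, 0;
                 0, 0, 0, 1, 0;
                 0, 0, 0, 0, 2;
                 0, 0, 0, 0, 0;
                 0, 0, 0, 0, 0])
    (hVp : Vp = !![0, 1/2, 0, 0, 0;
                   0, 0, -(1/2), 0, 0;
                   0, 0, 0, -(1/2), 0;
                   0, 0, 0, 0, -1;
                   0, 0, 0, 0, 0])
    (hH : H = !![1, 0, 0, 0, 0;
                 0, 1/2, 0, 0, 0;
                 0, 0, 0, 0, 0;
                 0, 0, 0, -(1/2), 0;
                 0, 0, 0, 0, -1])
    (hVm : Vm = !![0, 0, 0, -(h^2/16), 0;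
                   -1, 0, 0, 0, -(h^2/8);
                   0, -(1/2), 0, 0, 0;
                   0, 0, 1/2, 0, 0;
                   0, 0, 0, -(1/2), 0])
    (hY : Y = !![0, 0, h^2/8, 0, 0;
                 0, 0, 0, -(h^2/2), 0;
                 -2, 0, 0, 0, -(h^2/4);
                 0, 1, 0, 0, 0;
                 0, 0, 1, 0, 0]) :
    -- `T^α = I + αhX + (α²h²/2)X²` (valid since `X³ = 0`)
    let Tp : ℝ → Matrix (Fin 5) (Fin 5) ℝ :=
      fun α => 1 + (α * h) • X + ((α^2 * h^2) / 2) • (X * X)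
    let T := Tp 1
    let Tm1 := Tp (-1)
    let Th := Tp (1/2)
    let Tmh := Tp (-(1/2))
    let Tm3h := Tp (-(3/2))
    -- the tensor operators of the first form
    let t12 := Vp * Tm3h
    let t1 := Tm1 * X
    let t0 := H * Tm1 + (3*h/4) • (Tm1 * X)
    let tm12 := Vm * Th + (2*h) • (H * Vp * Tmh) + (h^2/2) • (Vp * Tmh * X)
    let tm1 := Y * T + (2*h) • (H * H) - (2*h) • (Vm * Vp * T)
      + h • (H * ((1 + (h^2/2) • (X * X)) + Tm1))
      + (h^2/8) • ((5 : ℝ) • (Tm1 * X) - (3*h) • (X * X))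
    -- the tensor operators of the second form
    let τm12 := Vm * Th + (2*h) • (H * Vp * Tmh) + (h/2) • (Vp * Tmh * (h • X - Tm1))
    let τm1 := Y * T + (2*h) • (H * H) - (2*h) • (Vm * Vp * T) + h^2 • (H * X)
      - (3*h^2/8) • X
    τm12 = tm12 - (h/2) • t12 ∧
    τm1 = tm1 - (2*h) • t0 + (h^2/2) • t1 := by
  subst hX
  simpa only [truncExp, truncCosh, mul_pow, ← pow_two] using
    stmt_18_general h (secondSuperdiagonal_pow_three (-1) 1 2) Vp H Vm Y
end
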